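/- Let b > 0, Δ ≥ 0, and m, m' ∈ ℝ with |m − m'| ≤ Δ. Then Lap(m, b) is absolutely continuous with respect to Lap(m', b) and for every real α > 1 the α-Rényi divergence satisfies D_α(Lap(m, b) ‖ Lap(m', b)) ≤ (Δ²/(2b²)) · α. (This is the paper's zCDP bound for the Laplace validation mechanism: with sensitivity Δ = 1 and scale λ_val, the per-round Rényi divergence is at most α/(2λ_val²).) -/

import Mathlib

open MeasureTheory

/-- The `α`-Rényi divergence `D_α(μ‖ν) = (1/(α−1)) · log ∫ (dμ/dν)^α dν`. -/
noncomputable def renyiDiv {X : Type*} [MeasurableSpace X]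
    (μ ν : Measure X) (α : ℝ) : ℝ :=
  (α - 1)⁻¹ * Real.log (∫ x, (μ.rnDeriv ν x).toReal ^ α ∂ν)

/-- The Laplace measure on `ℝ` with location `m` and scale `b`, with density
`x ↦ (1/(2b))·exp(−|x−m|/b)` with respect to Lebesgue measure. -/
noncomputable def laplaceMeasure (m b : ℝ) : Measure ℝ :=
  volume.withDensity (fun x => ENNReal.ofReal (1 / (2 * b) * Real.exp (-|x - m| / b)))

/-! Let `L = log (dμ/dν)`. If `μ` and `ν` are equivalent, then
`D_α(μ‖ν) = log E_μ[exp ((α - 1) L)] / (α - 1)` and `E_μ[exp (-L)] = 1`. When `|L| ≤ ε`, Hoeffding's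
lemma for `L` under `μ` at exponent `-1` bounds the mean, `E_μ[L] ≤ ε²/2`, and at exponent `α - 1`
it then yields `D_α(μ‖ν) ≤ ε²/2 + (α - 1) ε²/2 = (ε²/2) α`. For two Laplace measures of scale `b`,
the triangle inequality gives `|L| ≤ |m - m'| / b`. -/

open ProbabilityTheory

section CumulantGeneratingFunction

variable {Ω : Type*} [MeasurableSpace Ω] {μ : Measure Ω} {X : Ω → ℝ}

lemma cgf_sub_const [NeZero μ] {t : ℝ}
    (hX : Integrable (fun ω ↦ Real.exp (t * X ω)) μ) (c : ℝ) :
    cgf (fun ω ↦ X ω - c) μ t = cgf X μ t - t * c := by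
  simp only [cgf, sub_eq_add_neg, mgf_add_const]
  rw [Real.log_mul (mgf_pos' (NeZero.ne μ) hX).ne' (Real.exp_ne_zero _), Real.log_exp, mul_neg]

lemma cgf_le_of_mem_Icc [IsProbabilityMeasure μ] {a b : ℝ} (hX : AEMeasurable X μ)
    (hab : ∀ᵐ ω ∂μ, X ω ∈ Set.Icc a b) (t : ℝ) :
    cgf X μ t ≤ t * μ[X] + ((b - a) / 2) ^ 2 * t ^ 2 / 2 := by
  have hoeffding := (hasSubgaussianMGF_of_mem_Icc hX hab).cgf_le t
  rw [cgf_sub_const (integrable_exp_mul_of_mem_Icc hX hab)] at hoeffding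
  simp only [NNReal.coe_pow, NNReal.coe_div, coe_nnnorm, NNReal.coe_ofNat, Real.norm_eq_abs,
    div_pow, sq_abs] at hoeffding
  linarith [div_pow (b - a) 2 2]

lemma cgf_le_of_abs_le_of_cgf_neg_one_nonneg [IsProbabilityMeasure μ] {ε t : ℝ}
    (hX : AEMeasurable X μ) (hε : ∀ᵐ ω ∂μ, |X ω| ≤ ε) (hneg : 0 ≤ cgf X μ (-1)) (ht : 0 ≤ t) :
    cgf X μ t ≤ t * (ε ^ 2 / 2 * (t + 1)) := by
  have hoeffding (s : ℝ) : cgf X μ s ≤ s * μ[X] + ε ^ 2 * s ^ 2 / 2 := by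
    convert! cgf_le_of_mem_Icc hX (hε.mono fun _ ↦ abs_le.mp) s using 4
    ring
  have mean_le : μ[X] ≤ ε ^ 2 / 2 := by linarith [hoeffding (-1)]
  calc
    cgf X μ t ≤ t * μ[X] + ε ^ 2 * t ^ 2 / 2 := hoeffding t
    _ ≤ t * (ε ^ 2 / 2) + ε ^ 2 * t ^ 2 / 2 := by gcongr
    _ = t * (ε ^ 2 / 2 * (t + 1)) := by ring

end CumulantGeneratingFunction

section LogLikelihoodRatio

variable {X : Type*} [MeasurableSpace X] {μ ν : Measure X}

lemma llr_withDensity_exp [SigmaFinite ν] {f : X → ℝ} (hf : AEMeasurable f ν) :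
    llr (ν.withDensity fun x ↦ ENNReal.ofReal (Real.exp (f x))) ν =ᵐ[ν] f := by
  filter_upwards [Measure.rnDeriv_withDensity₀ ν hf.exp.ennreal_ofReal] with x hx
  rw [llr, hx, ENNReal.toReal_ofReal (Real.exp_nonneg _), Real.log_exp]

lemma mgf_llr_neg_one [SigmaFinite μ] [SigmaFinite ν] (hμν : μ ≪ ν) (hνμ : ν ≪ μ) :
    mgf (llr μ ν) μ (-1) = ν.real Set.univ := by
  rw [← Measure.integral_toReal_rnDeriv hνμ]
  simp only [mgf, neg_one_mul]
  exact integral_congr_ae (exp_neg_llr hμν)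

lemma integral_rnDeriv_rpow_eq_mgf_llr [SigmaFinite μ] [μ.HaveLebesgueDecomposition ν]
    (hμν : μ ≪ ν) {α : ℝ} (hα : α ≠ 0) :
    ∫ x, (μ.rnDeriv ν x).toReal ^ α ∂ν = mgf (llr μ ν) μ (α - 1) := by
  calc
    ∫ x, (μ.rnDeriv ν x).toReal ^ α ∂ν
      = ∫ x, (μ.rnDeriv ν x).toReal • (μ.rnDeriv ν x).toReal ^ (α - 1) ∂ν := by
        congr with x
        rw [smul_eq_mul, ← Real.rpow_one_add' ENNReal.toReal_nonneg (by simpa using hα),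
          add_sub_cancel]
    _ = ∫ x, (μ.rnDeriv ν x).toReal ^ (α - 1) ∂μ := integral_rnDeriv_smul hμν
    _ = mgf (llr μ ν) μ (α - 1) := by
        refine integral_congr_ae ?_
        filter_upwards [exp_llr_of_ac μ ν hμν] with x hx
        rw [← hx, ← Real.exp_mul, mul_comm]

lemma renyiDiv_eq_cgf_llr [SigmaFinite μ] [μ.HaveLebesgueDecomposition ν] (hμν : μ ≪ ν) {α : ℝ}
    (hα : α ≠ 0) : renyiDiv μ ν α = (α - 1)⁻¹ * cgf (llr μ ν) μ (α - 1) := by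
  rw [renyiDiv, integral_rnDeriv_rpow_eq_mgf_llr hμν hα, cgf]

theorem renyiDiv_le_of_abs_llr_le [IsProbabilityMeasure μ] [IsProbabilityMeasure ν]
    (hμν : μ ≪ ν) (hνμ : ν ≪ μ) {ε α : ℝ} (hε : ∀ᵐ x ∂μ, |llr μ ν x| ≤ ε) (hα : 1 < α) :
    renyiDiv μ ν α ≤ ε ^ 2 / 2 * α := by
  have hα' : 0 < α - 1 := sub_pos.mpr hα
  have cgf_neg_one : cgf (llr μ ν) μ (-1) = 0 := by
    rw [cgf, mgf_llr_neg_one hμν hνμ, probReal_univ, Real.log_one]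
  rw [renyiDiv_eq_cgf_llr hμν (by positivity), inv_mul_le_iff₀ hα']
  simpa only [sub_add_cancel] using cgf_le_of_abs_le_of_cgf_neg_one_nonneg
    (measurable_llr μ ν).aemeasurable hε cgf_neg_one.ge hα'.le

end LogLikelihoodRatio

section LaplaceMeasure

variable {b : ℝ}

lemma integral_exp_neg_abs_div (hb : 0 < b) : ∫ x : ℝ, Real.exp (-|x| / b) = 2 * b := by
  have half_line : ∫ x in Set.Ioi (0 : ℝ), Real.exp (-x / b) = b := by
    simpa [neg_div, div_eq_inv_mul] using integral_exp_mul_Ioi (neg_lt_zero.mpr (inv_pos.mpr hb)) 0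
  rw [integral_comp_abs (f := fun x ↦ Real.exp (-x / b)), half_line]

lemma integral_laplace_density (m : ℝ) (hb : 0 < b) :
    ∫ x : ℝ, 1 / (2 * b) * Real.exp (-|x - m| / b) = 1 := by
  rw [integral_const_mul, integral_sub_right_eq_self (fun x ↦ Real.exp (-|x| / b)) m,
    integral_exp_neg_abs_div hb, one_div_mul_cancel (by positivity)]

lemma isProbabilityMeasure_laplaceMeasure (m : ℝ) (hb : 0 < b) :
    IsProbabilityMeasure (laplaceMeasure m b) := by
  constructor
  rw [laplaceMeasure, withDensity_apply _ MeasurableSet.univ, Measure.restrict_univ,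
    ← ofReal_integral_eq_lintegral_ofReal
      (integrable_of_integral_eq_one (integral_laplace_density m hb))
      (ae_of_all _ fun x ↦ by positivity),
    integral_laplace_density m hb, ENNReal.ofReal_one]

lemma laplaceMeasure_eq_withDensity (m m' : ℝ) (hb : 0 < b) :
    laplaceMeasure m b = (laplaceMeasure m' b).withDensity
      fun x ↦ ENNReal.ofReal (Real.exp ((|x - m'| - |x - m|) / b)) := by
  rw [laplaceMeasure, laplaceMeasure, ← withDensity_mul _ (by fun_prop) (by fun_prop)]
  congr with x
  rw [Pi.mul_apply, ← ENNReal.ofReal_mul (by positivity), mul_assoc, ← Real.exp_add]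
  congr 3
  ring

lemma laplaceMeasure_absolutelyContinuous (m m' : ℝ) (hb : 0 < b) :
    laplaceMeasure m b ≪ laplaceMeasure m' b := by
  rw [laplaceMeasure_eq_withDensity m m' hb]
  exact withDensity_absolutelyContinuous _ _

lemma llr_laplaceMeasure (m m' : ℝ) (hb : 0 < b) :
    llr (laplaceMeasure m b) (laplaceMeasure m' b) =ᵐ[laplaceMeasure m' b]
      fun x ↦ (|x - m'| - |x - m|) / b := by
  have := isProbabilityMeasure_laplaceMeasure m' hb
  rw [laplaceMeasure_eq_withDensity m m' hb]
  exact llr_withDensity_exp (by fun_prop)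

lemma abs_llr_laplaceMeasure_le (m m' : ℝ) (hb : 0 < b) :
    ∀ᵐ x ∂laplaceMeasure m' b,
      |llr (laplaceMeasure m b) (laplaceMeasure m' b) x| ≤ |m - m'| / b := by
  filter_upwards [llr_laplaceMeasure m m' hb] with x hx
  have numerator_le : |(|x - m'| - |x - m|)| ≤ |m - m'| := by
    simpa only [sub_sub_sub_cancel_left] using abs_abs_sub_abs_le (x - m') (x - m)
  rw [hx, abs_div, abs_of_pos hb]
  exact div_le_div_of_nonneg_right numerator_le hb.le

end LaplaceMeasure

/-- The Laplace mechanism with sensitivity `Δ` and scale `b` satisfies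
`(Δ²/(2b²))`-zCDP: `D_α(Lap(m,b)‖Lap(m',b)) ≤ (Δ²/(2b²))·α` for all `α > 1`. -/
theorem laplace_zcdp (b Δ m m' : ℝ) (hb : 0 < b) (hΔ : 0 ≤ Δ) (hmm : |m - m'| ≤ Δ) :
    laplaceMeasure m b ≪ laplaceMeasure m' b ∧
      ∀ α : ℝ, 1 < α →
        renyiDiv (laplaceMeasure m b) (laplaceMeasure m' b) α ≤ Δ ^ 2 / (2 * b ^ 2) * α := by
  have hac := laplaceMeasure_absolutelyContinuous m m' hb
  refine ⟨hac, fun α hα ↦ ?_⟩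
  have := isProbabilityMeasure_laplaceMeasure m hb
  have := isProbabilityMeasure_laplaceMeasure m' hb
  have abs_llr_le : ∀ᵐ x ∂laplaceMeasure m b,
      |llr (laplaceMeasure m b) (laplaceMeasure m' b) x| ≤ Δ / b := by
    filter_upwards [hac.ae_le (abs_llr_laplaceMeasure_le m m' hb)] with x hx
    exact hx.trans (by gcongr)
  calc
    renyiDiv (laplaceMeasure m b) (laplaceMeasure m' b) α ≤ (Δ / b) ^ 2 / 2 * α :=
      renyiDiv_le_of_abs_llr_le hac (laplaceMeasure_absolutelyContinuous m' m hb) abs_llr_le hα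
    _ = Δ ^ 2 / (2 * b ^ 2) * α := by ring
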